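/- Let s ≥ 3 and e ≥ 2 be integers. In R(2,2^e)^{⊗s}, the element (z_{2,1}^{2^{e+1}−1} · z_{2,2}^{2^{e+1}−1}) · (z_{3,1}^{2^e+1} · z_{3,2}^{2^e+3}) · ∏_{i=4}^{s} (z_{i,1}^{2^e+1} · z_{i,2}^{2^e}) is nonzero (the product over 4 ≤ i ≤ s being empty if s = 3). -/

import Mathlib

/-!
Write `n = 2^e` and `R = R(2,n) = F_2[x,y]/(h_{n+1}(x,y), x^{n+2})`. Its top degree is `2n + 1`, and
the functional `φ` (`topForm`) taking the value `1` on `x^{n+1} y^n` and on `x^n y^{n+1}`, and `0`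
on all other monomials, is well defined on `R`.

Applying `φ` to all tensor factors of `R^{⊗ s}` except the first gives a linear map
`R^{⊗ s} → R` (`contract`). Since the `i`-th group `z_{i,1}^A z_{i,2}^B` of the product
involves only the first and the `i`-th factor, the contraction of the whole product is the product
of the contractions of the groups (`contract_prod_sum`), and each of these is read off from the
binomial expansion (`sum_topForm`):

* `z_{2,1}^{2n-1} z_{2,2}^{2n-1}` contributes `x^{n-2} y^{n-1} + x^{n-1} y^{n-2}`, because all
  binomial coefficients `C(2n-1, j)` with `j < 2n` are odd;
* `z_{3,1}^{n+1} z_{3,2}^{n+3}` contributes `y^3 + x y^2`, because `4 ∣ n` makes `C(n+3, 3)`,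
  `C(n+3, 2)` and `n + 1` odd;
* `z_{i,1}^{n+1} z_{i,2}^n` contributes `1` for `i ≥ 4`.

The product of these is `x^{n-2} y^{n+2} + x^n y^n` mod 2. After multiplication by `x`, the
functional `φ` takes the value `φ(x^{n-1} y^{n+2}) + φ(x^{n+1} y^n) = 1` on it, so the original
product is nonzero.
-/

open scoped TensorProduct

/-- Complete homogeneous symmetric polynomial of degree `d` in a list of elements
of a commutative (semi)ring: `h_d(l)`. -/
noncomputable def completeHomog {R : Type*} [CommSemiring R] : List R → ℕ → R
  | [], 0 => 1
  | [], _ + 1 => 0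
  | x :: l, d => ∑ t ∈ Finset.range (d + 1), x ^ t * completeHomog l (d - t)

/-- Elementary symmetric polynomial of degree `d` in a list of elements: `e_d(l)`. -/
noncomputable def elemSymm {R : Type*} [CommSemiring R] : List R → ℕ → R
  | _, 0 => 1
  | [], _ + 1 => 0
  | x :: l, d + 1 => elemSymm l (d + 1) + x * elemSymm l d

/-- The ideal of `(ZMod 2)[x_1, …, x_k]` generated by the complete homogeneous
symmetric polynomials `h_{m+i}(x_1, …, x_{k+1-i})` for `1 ≤ i ≤ k`. -/
noncomputable def flagIdeal (k m : ℕ) : Ideal (MvPolynomial (Fin k) (ZMod 2)) :=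
  Ideal.span { p | ∃ i : ℕ, 1 ≤ i ∧ i ≤ k ∧
    p = completeHomog (((List.finRange k).take (k + 1 - i)).map MvPolynomial.X) (m + i) }

/-- `R(k,m)`, the quotient of `(ZMod 2)[x_1, …, x_k]` by `flagIdeal k m`;
this is the mod-2 cohomology ring of the real flag manifold `F(1^k, m)`. -/
abbrev FlagRing (k m : ℕ) : Type :=
  MvPolynomial (Fin k) (ZMod 2) ⧸ flagIdeal k m

/-- The image of the variable `x_{j+1}` in `R(k,m)` (`j` is 0-indexed). -/
noncomputable def xGen (k m : ℕ) (j : Fin k) : FlagRing k m :=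
  Ideal.Quotient.mk (flagIdeal k m) (MvPolynomial.X j)

/-- The zero-divisor `z_{j+1} = x_{j+1} ⊗ 1 + 1 ⊗ x_{j+1}` in `R(k,m) ⊗ R(k,m)`. -/
noncomputable def zGen (k m : ℕ) (j : Fin k) :
    FlagRing k m ⊗[ZMod 2] FlagRing k m :=
  xGen k m j ⊗ₜ 1 + 1 ⊗ₜ xGen k m j

/-- `x_{i+1,j+1}` in the `s`-fold tensor power `R(k,m)^{⊗ s}`: the element having
`x_{j+1}` in the `(i+1)`-st tensor factor and `1` elsewhere (`i`, `j` 0-indexed). -/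
noncomputable def xT (k m s : ℕ) (i : Fin s) (j : Fin k) :
    ⨂[ZMod 2] _ : Fin s, FlagRing k m :=
  PiTensorProduct.tprod (ZMod 2) (fun t => if t = i then xGen k m j else 1)

/-- The `s`-th zero-divisor `z_{i+1,j+1} = x_{1,j+1} + x_{i+1,j+1}` in `R(k,m)^{⊗ s}`. -/
noncomputable def zT (k m s : ℕ) (hs : 0 < s) (i : Fin s) (j : Fin k) :
    ⨂[ZMod 2] _ : Fin s, FlagRing k m :=
  xT k m s ⟨0, hs⟩ j + xT k m s i j

/-! ### The top-degree functional on `R(2,n)` -/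

open MvPolynomial in
/-- The functional `x^{n+1} y^n ↦ 1`, `x^n y^{n+1} ↦ 1`, all other monomials `↦ 0`, on
polynomials in `x = X 0`, `y = X 1`. It descends to evaluation against the fundamental class
of `R(2,n)`, whose top degree is `2n + 1`. -/
noncomputable def topPoly (n : ℕ) : MvPolynomial (Fin 2) (ZMod 2) →ₗ[ZMod 2] ZMod 2 :=
  lcoeff (ZMod 2) (Finsupp.single 0 (n + 1) + Finsupp.single 1 n) +
    lcoeff (ZMod 2) (Finsupp.single 0 n + Finsupp.single 1 (n + 1))

open MvPolynomial in
lemma topPoly_monomial (n a b : ℕ) :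
    topPoly n (X 0 ^ a * X 1 ^ b) =
      (if a = n + 1 ∧ b = n then 1 else 0) + (if a = n ∧ b = n + 1 then 1 else 0) := by
  have key : ∀ c d : ℕ, coeff (Finsupp.single 0 c + Finsupp.single 1 d)
      (X 0 ^ a * X 1 ^ b : MvPolynomial (Fin 2) (ZMod 2)) = if a = c ∧ b = d then 1 else 0 := by
    intro c d
    rw [X_pow_eq_monomial, X_pow_eq_monomial, monomial_mul, coeff_monomial]
    have : ((Finsupp.single 0 a + Finsupp.single 1 b : Fin 2 →₀ ℕ) =
        Finsupp.single 0 c + Finsupp.single 1 d) ↔ (a = c ∧ b = d) := by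
      simp [Finsupp.ext_iff, Fin.forall_fin_two]
    simp only [this, mul_one]
  simp only [topPoly, LinearMap.add_apply, lcoeff_apply, key]

open MvPolynomial in
/-- A monomial multiple of `h_{n+1}(x,y)` involves `x^{n+1} y^n` and `x^n y^{n+1}` either both
(in degree `2n + 1`) or not at all, so its two contributions cancel mod 2. -/
lemma topPoly_mul_completeHomog_two (n a b : ℕ) :
    topPoly n (X 0 ^ a * X 1 ^ b *
      ∑ t ∈ Finset.range (n + 1 + 1), X 0 ^ t * X 1 ^ (n + 1 - t)) = 0 := by
  have h : ∀ t, (X 0 ^ a * X 1 ^ b * (X 0 ^ t * X 1 ^ (n + 1 - t)) :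
      MvPolynomial (Fin 2) (ZMod 2)) = X 0 ^ (a + t) * X 1 ^ (b + (n + 1 - t)) := by
    intro t; ring
  simp only [Finset.mul_sum, h, map_sum, topPoly_monomial, Finset.sum_add_distrib]
  by_cases hab : a + b = n
  · rw [Finset.sum_eq_single (n + 1 - a), Finset.sum_eq_single (n - a)]
    · rw [if_pos (by omega), if_pos (by omega)]; exact CharTwo.add_self_eq_zero 1
    · intro t ht hne
      rw [Finset.mem_range] at ht
      rw [if_neg (by omega)]
    · intro h; rw [Finset.mem_range] at h; omega
    · intro t ht hne
      rw [Finset.mem_range] at ht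
      rw [if_neg (by omega)]
    · intro h; rw [Finset.mem_range] at h; omega
  · rw [Finset.sum_eq_zero, Finset.sum_eq_zero, add_zero]
    · intro t ht
      rw [Finset.mem_range] at ht
      rw [if_neg (by omega)]
    · intro t ht
      rw [Finset.mem_range] at ht
      rw [if_neg (by omega)]

lemma completeHomog_singleton {R : Type*} [CommSemiring R] (x : R) (d : ℕ) :
    completeHomog [x] d = x ^ d := by
  rw [completeHomog, Finset.sum_range_succ, Finset.sum_eq_zero]
  · simp [completeHomog]
  · intro t ht
    rw [Finset.mem_range] at ht
    obtain ⟨c, hc⟩ : ∃ c, d - t = c + 1 := ⟨d - t - 1, by omega⟩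
    rw [hc, completeHomog, mul_zero]

open MvPolynomial in
lemma topPoly_mul_generator (n i : ℕ) (h1 : 1 ≤ i) (h2 : i ≤ 2)
    (p : MvPolynomial (Fin 2) (ZMod 2)) :
    topPoly n (p * completeHomog (((List.finRange 2).take (2 + 1 - i)).map X) (n + i)) = 0 := by
  induction p using MvPolynomial.induction_on' with
  | add p q hp hq => rw [add_mul, map_add, hp, hq, add_zero]
  | monomial v c =>
    have hv : (monomial v c : MvPolynomial (Fin 2) (ZMod 2)) =
        c • (X 0 ^ v 0 * X 1 ^ v 1) := by
      rw [monomial_eq, smul_eq_C_mul, Finsupp.prod_fintype _ _ (by simp), Fin.prod_univ_two]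
    rw [hv, smul_mul_assoc, map_smul]
    obtain rfl | rfl : i = 1 ∨ i = 2 := by omega
    · have hl : ((List.finRange 2).take (2 + 1 - 1)).map
          (X : Fin 2 → MvPolynomial (Fin 2) (ZMod 2)) = [X 0, X 1] := rfl
      rw [hl, completeHomog]
      simp only [completeHomog_singleton]
      rw [topPoly_mul_completeHomog_two, smul_zero]
    · have hl : ((List.finRange 2).take (2 + 1 - 2)).map
          (X : Fin 2 → MvPolynomial (Fin 2) (ZMod 2)) = [X 0] := rfl
      have hm : (X 0 ^ v 0 * X 1 ^ v 1 * X 0 ^ (n + 2) : MvPolynomial (Fin 2) (ZMod 2)) =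
          X 0 ^ (v 0 + (n + 2)) * X 1 ^ v 1 := by ring
      rw [hl, completeHomog_singleton, hm, topPoly_monomial, if_neg (by omega),
        if_neg (by omega), add_zero, smul_zero]

lemma topPoly_eq_zero (n : ℕ) (p : MvPolynomial (Fin 2) (ZMod 2)) (hp : p ∈ flagIdeal 2 n) :
    topPoly n p = 0 := by
  rw [flagIdeal, Ideal.span] at hp
  induction hp using Submodule.closure_induction with
  | zero => simp
  | add x y _ _ hx hy => rw [map_add, hx, hy, add_zero]
  | smul_mem r x h =>
    obtain ⟨i, h1, h2, rfl⟩ := h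
    exact topPoly_mul_generator n i h1 h2 r

/-- The functional on `R(2,n)` induced by `topPoly n`. -/
noncomputable def topForm (n : ℕ) : FlagRing 2 n →ₗ[ZMod 2] ZMod 2 :=
  ((flagIdeal 2 n).restrictScalars (ZMod 2)).liftQ (topPoly n)
    fun p hp => topPoly_eq_zero n p hp

lemma topForm_monomial (n a b : ℕ) :
    topForm n (xGen 2 n 0 ^ a * xGen 2 n 1 ^ b) =
      (if a = n + 1 ∧ b = n then 1 else 0) + (if a = n ∧ b = n + 1 then 1 else 0) :=
  topPoly_monomial n a b

/-! ### Contracting all tensor factors but one -/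

open PiTensorProduct

/-- The contraction `S^{⊗ s} → S` applying `φ` to every tensor factor except the one at `o`,
that is, `⊗ r_i ↦ r_o ∏_{i ≠ o} φ(r_i)`. -/
noncomputable def contract {S : Type*} [CommRing S] [Algebra (ZMod 2) S]
    (φ : S →ₗ[ZMod 2] ZMod 2) {s : ℕ} (o : Fin s) :
    (⨂[ZMod 2] _ : Fin s, S) →ₗ[ZMod 2] S :=
  lift ((MultilinearMap.mkPiAlgebra (ZMod 2) (Fin s) S).compLinearMap fun i =>
    if i = o then LinearMap.id else (Algebra.linearMap (ZMod 2) S).comp φ)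

lemma contract_tprod {S : Type*} [CommRing S] [Algebra (ZMod 2) S]
    (φ : S →ₗ[ZMod 2] ZMod 2) {s : ℕ} (o : Fin s) (r : Fin s → S) :
    contract φ o (tprod (ZMod 2) r) =
      ∏ i, if i = o then r i else algebraMap (ZMod 2) S (φ (r i)) := by
  simp only [contract, lift.tprod, MultilinearMap.compLinearMap_apply,
    MultilinearMap.mkPiAlgebra_apply]
  refine Finset.prod_congr rfl fun i _ => ?_
  split_ifs <;> simp

lemma contract_single_mul_tprod {S : Type*} [CommRing S] [Algebra (ZMod 2) S]
    (φ : S →ₗ[ZMod 2] ZMod 2) {s : ℕ} (o : Fin s) (u : S) (r : Fin s → S) :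
    contract φ o (singleAlgHom o u * tprod (ZMod 2) r) =
      u * ∏ i, if i = o then r i else algebraMap (ZMod 2) S (φ (r i)) := by
  have h : (singleAlgHom o u : ⨂[ZMod 2] _ : Fin s, S) =
    PiTensorProduct.tprod (ZMod 2) (Pi.mulSingle o u : Fin s → S) := rfl
  rw [h, tprod_mul_tprod, contract_tprod,
    ← Finset.mul_prod_erase _ _ (Finset.mem_univ o),
    ← Finset.mul_prod_erase _ _ (Finset.mem_univ o), ← mul_assoc]
  congr 1
  · simp
  · refine Finset.prod_congr rfl fun i hi => ?_
    have hi : i ≠ o := Finset.ne_of_mem_erase hi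
    simp [hi]

lemma prod_single {S : Type*} [CommRing S] [Algebra (ZMod 2) S] {s : ℕ} (r : Fin s → S) :
    ∏ i, (singleAlgHom i (r i) : ⨂[ZMod 2] _ : Fin s, S) = tprod (ZMod 2) r := by
  have h : ∀ i, (singleAlgHom i (r i) : ⨂[ZMod 2] _ : Fin s, S) =
    PiTensorProduct.tprod (ZMod 2) (Pi.mulSingle i (r i) : Fin s → S) := fun _ => rfl
  simp only [h]
  refine (tprod_prod Finset.univ fun i => (Pi.mulSingle i (r i) : Fin s → S)).symm.trans ?_
  rw [Finset.univ_prod_mulSingle]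

/-- The contraction is multiplicative on products of elements `w_i`, one for each `i`, where `w_i`
involves only the tensor factors `o` and `i`. -/
lemma contract_prod_sum {S : Type*} [CommRing S] [Algebra (ZMod 2) S]
    (φ : S →ₗ[ZMod 2] ZMod 2) {s : ℕ} (o : Fin s) {κ : Type*} (K : Fin s → Finset κ)
    (u v : Fin s → κ → S) :
    contract φ o (∏ i, ∑ k ∈ K i, singleAlgHom o (u i k) * singleAlgHom i (v i k)) =
      ∏ i, ∑ k ∈ K i,
        u i k * if i = o then v i k else algebraMap (ZMod 2) S (φ (v i k)) := by
  classical
  rw [Finset.prod_univ_sum, Finset.prod_univ_sum, map_sum]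
  refine Finset.sum_congr rfl fun p _ => ?_
  rw [Finset.prod_mul_distrib, ← map_prod, prod_single, contract_single_mul_tprod,
    Finset.prod_mul_distrib]

/-! ### Contracting powers of the zero-divisors -/

lemma zT_eq (k m s : ℕ) (hs : 0 < s) (i : Fin s) (j : Fin k) :
    zT k m s hs i j = singleAlgHom ⟨0, hs⟩ (xGen k m j) + singleAlgHom i (xGen k m j) := by
  have h : ∀ i : Fin s, xT k m s i j = singleAlgHom i (xGen k m j) := by
    intro i
    change _ = PiTensorProduct.tprod (ZMod 2)
      (Pi.mulSingle i (xGen k m j) : Fin s → FlagRing k m)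
    rw [xT]
    congr 1
    ext t
    rw [Pi.mulSingle_apply]
  rw [zT, h, h]

lemma add_pow_mul_add_pow {S : Type*} [CommRing S] (a b c d : S) (A B : ℕ) :
    (a + c) ^ A * (b + d) ^ B = ∑ k ∈ Finset.range (A + 1) ×ˢ Finset.range (B + 1),
      ((A.choose k.1 * B.choose k.2 : ℕ) : S) * (a ^ (A - k.1) * b ^ (B - k.2)) *
        (c ^ k.1 * d ^ k.2) := by
  rw [add_comm a, add_comm b, add_pow, add_pow, Finset.sum_mul_sum, ← Finset.sum_product']
  refine Finset.sum_congr rfl fun k _ => ?_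
  push_cast
  ring

lemma zT_pow_mul_pow (m s : ℕ) (hs : 0 < s) (i : Fin s) (A B : ℕ) :
    zT 2 m s hs i 0 ^ A * zT 2 m s hs i 1 ^ B =
      ∑ k ∈ Finset.range (A + 1) ×ˢ Finset.range (B + 1),
        singleAlgHom ⟨0, hs⟩ (((A.choose k.1 * B.choose k.2 : ℕ) : FlagRing 2 m) *
            (xGen 2 m 0 ^ (A - k.1) * xGen 2 m 1 ^ (B - k.2))) *
          singleAlgHom i (xGen 2 m 0 ^ k.1 * xGen 2 m 1 ^ k.2) := by
  rw [zT_eq, zT_eq]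
  refine (add_pow_mul_add_pow (S := ⨂[ZMod 2] _ : Fin s, FlagRing 2 m) _ _ _ _ A B).trans
    (Finset.sum_congr rfl fun k _ => ?_)
  simp only [map_mul, map_pow, map_natCast]

/-- Applying the top functional to the second factor of `z_1^A z_2^B` leaves two terms, one for each
monomial on which it does not vanish. Exponents that are truncated to `0` come with a vanishing
binomial coefficient. -/
lemma sum_topForm (n A B : ℕ) :
    ∑ k ∈ Finset.range (A + 1) ×ˢ Finset.range (B + 1),
        (((A.choose k.1 * B.choose k.2 : ℕ) : FlagRing 2 n) *
            (xGen 2 n 0 ^ (A - k.1) * xGen 2 n 1 ^ (B - k.2))) *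
          algebraMap (ZMod 2) (FlagRing 2 n) (topForm n (xGen 2 n 0 ^ k.1 * xGen 2 n 1 ^ k.2)) =
      ((A.choose (n + 1) * B.choose n : ℕ) : FlagRing 2 n) *
          (xGen 2 n 0 ^ (A - (n + 1)) * xGen 2 n 1 ^ (B - n)) +
        ((A.choose n * B.choose (n + 1) : ℕ) : FlagRing 2 n) *
          (xGen 2 n 0 ^ (A - n) * xGen 2 n 1 ^ (B - (n + 1))) := by
  have key : ∀ c d : ℕ, ∑ k ∈ Finset.range (A + 1) ×ˢ Finset.range (B + 1),
        (((A.choose k.1 * B.choose k.2 : ℕ) : FlagRing 2 n) *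
            (xGen 2 n 0 ^ (A - k.1) * xGen 2 n 1 ^ (B - k.2))) *
          algebraMap (ZMod 2) (FlagRing 2 n) (if k.1 = c ∧ k.2 = d then 1 else 0) =
      ((A.choose c * B.choose d : ℕ) : FlagRing 2 n) *
          (xGen 2 n 0 ^ (A - c) * xGen 2 n 1 ^ (B - d)) := by
    intro c d
    rw [Finset.sum_eq_single (c, d)]
    · simp
    · intro k _ hk
      rw [if_neg (fun h => hk (Prod.ext h.1 h.2)), map_zero, mul_zero]
    · intro h
      have : A.choose c * B.choose d = 0 := by
        rw [Nat.mul_eq_zero]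
        simp only [Finset.mem_product, Finset.mem_range, not_and_or, not_lt] at h
        exact h.imp (fun h => Nat.choose_eq_zero_of_lt h) fun h => Nat.choose_eq_zero_of_lt h
      rw [this]; simp
  simp only [topForm_monomial, map_add, mul_add, Finset.sum_add_distrib, key]

/-! ### Parity of binomial coefficients -/

lemma odd_choose_two_pow_sub_one (k j : ℕ) (hj : j < 2 ^ k) : Odd ((2 ^ k - 1).choose j) := by
  induction j with
  | zero => simp
  | succ j ih =>
    have hd := Nat.prime_two.dvd_choose_pow (n := k) (Nat.succ_ne_zero j) hj.ne
    have hp : 2 ^ k = (2 ^ k - 1) + 1 := by omega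
    rw [hp, Nat.choose_succ_succ, Nat.succ_eq_add_one] at hd
    have := ih (by omega)
    rw [Nat.odd_iff] at *
    omega

lemma odd_choose_three (m : ℕ) : Odd ((4 * m + 3).choose (4 * m)) := by
  have h : (4 * m + 3).choose (4 * m) = (4 * m + 3).choose 3 :=
    Nat.choose_symm_of_eq_add (by ring)
  rw [h]
  have h2 := Nat.descFactorial_eq_factorial_mul_choose (4 * m + 3) 3
  simp [Nat.descFactorial, Nat.factorial] at h2
  have h3 : 3 * (4 * m + 3).choose 3 = (4 * m + 1) * (2 * m + 1) * (4 * m + 3) := by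
    nlinarith
  have : Odd (3 * (4 * m + 3).choose 3) := by
    rw [h3]
    exact ((show Odd (4 * m + 1) from ⟨2 * m, by ring⟩).mul ⟨m, rfl⟩).mul ⟨2 * m + 1, by ring⟩
  exact (Nat.odd_mul.mp this).2

lemma odd_choose_two (m : ℕ) : Odd ((4 * m + 3).choose (4 * m + 1)) := by
  have h : (4 * m + 3).choose (4 * m + 1) = (4 * m + 3).choose 2 :=
    Nat.choose_symm_of_eq_add (by ring)
  rw [h]
  have h2 := Nat.descFactorial_eq_factorial_mul_choose (4 * m + 3) 2
  simp [Nat.descFactorial, Nat.factorial] at h2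
  have h3 : (4 * m + 3).choose 2 = (2 * m + 1) * (4 * m + 3) := by
    nlinarith
  rw [h3]
  exact (show Odd (2 * m + 1) from ⟨m, rfl⟩).mul ⟨2 * m + 1, by ring⟩

lemma natCast_eq_one_of_odd (n c : ℕ) (hc : Odd c) : (c : FlagRing 2 n) = 1 := by
  have : (c : ZMod 2) = 1 := (ZMod.natCast_eq_one_iff_odd).2 hc
  rw [← map_natCast (algebraMap (ZMod 2) (FlagRing 2 n)), this, map_one]

/-! ### Nonvanishing of the product -/

/-- The exponents at the base index are `0`, so that the (zero) elements `z_{1,j}` contribute `1`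
and the product effectively runs over the other indices. -/
lemma contract_zT (n s : ℕ) (hs : 0 < s) (A B : Fin s → ℕ) (hA : A ⟨0, hs⟩ = 0)
    (hB : B ⟨0, hs⟩ = 0) :
    contract (topForm n) ⟨0, hs⟩ (∏ i, (zT 2 n s hs i 0 ^ A i * zT 2 n s hs i 1 ^ B i)) =
      ∏ i ∈ Finset.univ.erase ⟨0, hs⟩,
        (((A i).choose (n + 1) * (B i).choose n : ℕ) * (xGen 2 n 0 ^ (A i - (n + 1)) *
            xGen 2 n 1 ^ (B i - n)) +
          ((A i).choose n * (B i).choose (n + 1) : ℕ) *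
          (xGen 2 n 0 ^ (A i - n) * xGen 2 n 1 ^ (B i - (n + 1)))) := by
  simp only [zT_pow_mul_pow]
  rw [contract_prod_sum (topForm n) ⟨0, hs⟩
    (fun i => Finset.range (A i + 1) ×ˢ Finset.range (B i + 1))
    (fun i k => (((A i).choose k.1 * (B i).choose k.2 : ℕ) : FlagRing 2 n) *
            (xGen 2 n 0 ^ (A i - k.1) * xGen 2 n 1 ^ (B i - k.2)))
    (fun i k => xGen 2 n 0 ^ k.1 * xGen 2 n 1 ^ k.2),
    ← Finset.mul_prod_erase _ _ (Finset.mem_univ ⟨0, hs⟩)]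
  have h0 : ∀ x y : ℕ, x = 0 → y = 0 → ∑ k ∈ Finset.range (x + 1) ×ˢ Finset.range (y + 1),
      ((x.choose k.1 * y.choose k.2 : ℕ) : FlagRing 2 n) *
            (xGen 2 n 0 ^ (x - k.1) * xGen 2 n 1 ^ (y - k.2)) *
            (xGen 2 n 0 ^ k.1 * xGen 2 n 1 ^ k.2) = 1 := by
    rintro _ _ rfl rfl
    simp
  simp only [if_true]
  rw [h0 _ _ hA hB, one_mul]
  refine Finset.prod_congr rfl fun i hi => ?_
  simp only [if_neg (Finset.ne_of_mem_erase hi)]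
  exact sum_topForm n (A i) (B i)

/-- for `s ≥ 3` and `e ≥ 2`, in `R(2, 2^e)^{⊗s}` one has
`(z_{2,1}^{2^{e+1}-1} z_{2,2}^{2^{e+1}-1}) · (z_{3,1}^{2^e+1} z_{3,2}^{2^e+3}) ·
∏_{i=4}^{s} (z_{i,1}^{2^e+1} z_{i,2}^{2^e}) ≠ 0`. -/
theorem statement19 (s e : ℕ) (hs : 3 ≤ s) (he : 2 ≤ e) :
    (zT 2 (2 ^ e) s (by omega) ⟨1, by omega⟩ 0 ^ (2 ^ (e + 1) - 1) *
        zT 2 (2 ^ e) s (by omega) ⟨1, by omega⟩ 1 ^ (2 ^ (e + 1) - 1)) *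
      (zT 2 (2 ^ e) s (by omega) ⟨2, by omega⟩ 0 ^ (2 ^ e + 1) *
        zT 2 (2 ^ e) s (by omega) ⟨2, by omega⟩ 1 ^ (2 ^ e + 3)) *
      ∏ i ∈ Finset.univ.filter (fun i : Fin s => 3 ≤ i.val),
        (zT 2 (2 ^ e) s (by omega) i 0 ^ (2 ^ e + 1) *
          zT 2 (2 ^ e) s (by omega) i 1 ^ (2 ^ e)) ≠ 0 := by
  obtain ⟨m, hm, hm0⟩ : ∃ m, 2 ^ e = 4 * m ∧ 0 < m :=
    ⟨2 ^ (e - 2), by rw [show (4 : ℕ) = 2 ^ 2 by norm_num, ← pow_add]; congr 1; omega,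
      by positivity⟩
  have hdbl : 2 ^ (e + 1) = 2 ^ e + 2 ^ e := by ring
  have hodd := odd_choose_two_pow_sub_one (e + 1)
  set n := 2 ^ e with hn
  set N := 2 ^ (e + 1) - 1 with hN
  have hs0 : 0 < s := by omega
  -- The exponents of `z_{i,1}` and `z_{i,2}`, with `i` 0-indexed.
  let A : Fin s → ℕ := fun i => if i.val = 0 then 0 else if i.val = 1 then N else n + 1
  let B : Fin s → ℕ := fun i => if i.val = 0 then 0 else if i.val = 1 then N else
    if i.val = 2 then n + 3 else n
  have hsplit : ∀ {M : Type} [CommMonoid M] (f : Fin s → M),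
      ∏ i ∈ Finset.univ.erase ⟨0, hs0⟩, f i = (f ⟨1, by omega⟩ * f ⟨2, by omega⟩) *
        ∏ i ∈ Finset.univ.filter (fun i : Fin s => 3 ≤ i.val), f i := by
    intro M _ f
    have h1 : (⟨1, by omega⟩ : Fin s) ∈ Finset.univ.erase (⟨0, hs0⟩ : Fin s) := by
      simp [Fin.ext_iff]
    have h2 : (⟨2, by omega⟩ : Fin s) ∈
        (Finset.univ.erase (⟨0, hs0⟩ : Fin s)).erase ⟨1, by omega⟩ := by
      simp [Fin.ext_iff]
    rw [← Finset.mul_prod_erase _ _ h1, ← Finset.mul_prod_erase _ _ h2, mul_assoc]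
    congr 2
    refine Finset.prod_congr ?_ fun _ _ => rfl
    ext i
    simp only [Finset.mem_erase, Finset.mem_filter, Finset.mem_univ, Fin.ext_iff, ne_eq,
      and_true, true_and]
    omega
  intro hzero
  have hc := contract_zT n s hs0 A B (by simp [A]) (by simp [B])
  have hlhs : ∏ i, (zT 2 n s hs0 i 0 ^ A i * zT 2 n s hs0 i 1 ^ B i) = 0 := by
    rw [← Finset.mul_prod_erase _ _ (Finset.mem_univ (⟨0, hs0⟩ : Fin s)), hsplit]
    rw [← mul_zero (zT 2 n s hs0 ⟨0, hs0⟩ 0 ^ A ⟨0, hs0⟩ * zT 2 n s hs0 ⟨0, hs0⟩ 1 ^ B ⟨0, hs0⟩),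
      ← hzero]
    congr 2
    refine Finset.prod_congr rfl fun i hi => ?_
    have hi : 3 ≤ i.val := (Finset.mem_filter.1 hi).2
    have hA : A i = n + 1 := by simp only [A]; rw [if_neg (by omega), if_neg (by omega)]
    have hB : B i = n := by
      simp only [B]; rw [if_neg (by omega), if_neg (by omega), if_neg (by omega)]
    rw [hA, hB]
  have hrest : ∏ i ∈ Finset.univ.filter (fun i : Fin s => 3 ≤ i.val),
        ((((A i).choose (n + 1) * (B i).choose n : ℕ) : FlagRing 2 n) *
            (xGen 2 n 0 ^ (A i - (n + 1)) * xGen 2 n 1 ^ (B i - n)) +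
          ((A i).choose n * (B i).choose (n + 1) : ℕ) *
          (xGen 2 n 0 ^ (A i - n) * xGen 2 n 1 ^ (B i - (n + 1)))) = 1 := by
    refine Finset.prod_eq_one fun i hi => ?_
    have hi : 3 ≤ i.val := (Finset.mem_filter.1 hi).2
    have hA : A i = n + 1 := by simp only [A]; rw [if_neg (by omega), if_neg (by omega)]
    have hB : B i = n := by
      simp only [B]; rw [if_neg (by omega), if_neg (by omega), if_neg (by omega)]
    rw [hA, hB]
    simp
  rw [hlhs, map_zero, hsplit, hrest, mul_one] at hc
  have hA1 : A ⟨1, by omega⟩ = N := rfl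
  have hB1 : B ⟨1, by omega⟩ = N := rfl
  have hA2 : A ⟨2, by omega⟩ = n + 1 := rfl
  have hB2 : B ⟨2, by omega⟩ = n + 3 := rfl
  have o1 : Odd (N.choose n) := hodd n (by omega)
  have o2 : Odd (N.choose (n + 1)) := hodd (n + 1) (by omega)
  have o3 : Odd ((n + 3).choose n) := hm ▸ odd_choose_three m
  have o4 : Odd ((n + 3).choose (n + 1)) := hm ▸ odd_choose_two m
  have o5 : Odd ((n + 1).choose n) := by
    rw [Nat.choose_succ_self_right]; exact ⟨2 * m, by omega⟩
  rw [hA1, hB1, hA2, hB2, natCast_eq_one_of_odd n _ (o2.mul o1),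
    natCast_eq_one_of_odd n _ (o1.mul o2), natCast_eq_one_of_odd n _ (o5.mul o4),
    Nat.choose_self, natCast_eq_one_of_odd n _ (odd_one.mul o3)] at hc
  rw [show N - (n + 1) = n - 2 by omega, show N - n = n - 1 by omega,
    show n + 1 - (n + 1) = 0 by omega, show n + 3 - n = 3 by omega,
    show n + 1 - n = 1 by omega, show n + 3 - (n + 1) = 2 by omega] at hc
  obtain ⟨q, hq⟩ : ∃ q, n = q + 2 := ⟨n - 2, by omega⟩
  rw [show n - 2 = q by omega, show n - 1 = q + 1 by omega] at hc
  -- `hc` says that the contraction `(x^{n-2} y^{n-1} + x^{n-1} y^{n-2}) (y^3 + x y^2)` vanishes;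
  -- multiplying it by `x` brings it to the top degree.
  have hx : xGen 2 n 0 * 0 = xGen 2 n 0 ^ (q + 1) * xGen 2 n 1 ^ (q + 4) +
      (xGen 2 n 0 ^ (q + 2) * xGen 2 n 1 ^ (q + 3) +
        xGen 2 n 0 ^ (q + 2) * xGen 2 n 1 ^ (q + 3)) +
      xGen 2 n 0 ^ (q + 3) * xGen 2 n 1 ^ (q + 2) := by
    rw [hc]
    ring
  have hφ := congrArg (topForm n) hx
  rw [mul_zero, map_zero, map_add, map_add, map_add, CharTwo.add_self_eq_zero, add_zero,
    topForm_monomial, topForm_monomial, if_neg (by omega), if_neg (by omega),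
    if_pos (by omega), if_neg (by omega), add_zero, add_zero, zero_add] at hφ
  exact zero_ne_one hφ
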